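/- Quantitative distortion obstruction for nested sets (Proposition on distortions): let n ≥ 2 and let E, E₁, E₂ ⊂ ℝⁿ be sets of positive finite measure with E₁ ∪ E₂ ⊂ E, E₁ ∩ E₂ = ∅, and |E₁| ≥ |E₂|. Then there is a constant C_n > 0 depending only on n such that (|E| D(E)^{n/(n−1)} + |E₁| D(E₁)^{n/(n−1)} + |E₂| D(E₂)^{n/(n−1)}) / (|E| + |E₁ ∪ E₂|) ≥ C_n (|E₂|/(|E₁| + |E₂|))^{n/(n−1)} · [ ((|E₁|^{1/n} + |E₂|^{1/n})ⁿ − |E|) / ((|E₁|^{1/n} + |E₂|^{1/n})ⁿ − |E₁ ∪ E₂|) ]^{n(n+1)/(2(n−1))}, where the last bracket is interpreted as the estimate being trivial (right-hand side nonpositive) when |E| ≥ (|E₁|^{1/n} + |E₂|^{1/n})ⁿ. -/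

import Mathlib

open MeasureTheory Metric Set

/-- The Fraenkel asymmetry of a measurable set `E ⊆ ℝⁿ`. -/
noncomputable def fraenkelAsymmetry {n : ℕ} (E : Set (EuclideanSpace ℝ (Fin n))) : ℝ :=
  sInf {t : ℝ | ∃ (x : EuclideanSpace ℝ (Fin n)) (r : ℝ),
    volume (ball x r) = volume E ∧
    t = (volume (symmDiff E (ball x r))).toReal / (volume E).toReal}

/-!
Let `B`, `B₁`, `B₂` be balls approximating `E`, `E₁`, `E₂`, of the same volumes and hence of radii
`R`, `r₁`, `r₂`. Points of `B₁ \ B`, `B₂ \ B` and `B₁ ∩ B₂` lie in one of the three symmetric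
differences, because `E₁` and `E₂` are disjoint subsets of `E`. If `t = r₁ + r₂ - R > 0`, one of
these three regions contains a spherical cap of height `t / 2` in a ball of radius at least `r₂`.
Such a cap contains an ellipsoid with one semi-axis `t / 4` and all the others `√(r₂ t / 4)`, so
`|E| D(E) + |E₁| D(E₁) + |E₂| D(E₂) ≥ |E₂| (t / (4 r₂)) ^ ((n + 1) / 2)`. The bracket of the
estimate is at most a constant times `t / (4 r₂)`, and Jensen's inequality for
`z ↦ z ^ (n / (n - 1))` passes from the weighted mean of the asymmetries to that of their powers.
-/

section SphericalCap

variable {V : Type*} [NormedAddCommGroup V] [InnerProductSpace ℝ V]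

/-- The linear map scaling by `h` along the unit vector `u` and by `ρ` on its orthogonal
complement; it maps the unit ball onto an ellipsoid of revolution. -/
noncomputable def axialScaling (u : V) (h ρ : ℝ) : V →ₗ[ℝ] V :=
  ρ • LinearMap.id + (h - ρ) • (innerₛₗ ℝ u).smulRight u

lemma axialScaling_apply (u w : V) (h ρ : ℝ) :
    axialScaling u h ρ w = ρ • w + ((h - ρ) * inner ℝ u w) • u := by
  simp [axialScaling, smul_smul]

lemma inner_axialScaling {u : V} (hu : ‖u‖ = 1) (w : V) (h ρ : ℝ) :
    inner ℝ u (axialScaling u h ρ w) = h * inner ℝ u w := by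
  rw [axialScaling_apply, inner_add_right, inner_smul_right, inner_smul_right,
    real_inner_self_eq_norm_sq, hu]
  ring

lemma norm_axialScaling_sq {u : V} (hu : ‖u‖ = 1) (w : V) (h ρ : ℝ) :
    ‖axialScaling u h ρ w‖ ^ 2 =
      (h * inner ℝ u w) ^ 2 + ρ ^ 2 * (‖w‖ ^ 2 - inner ℝ u w ^ 2) := by
  rw [axialScaling_apply, norm_add_sq_real, real_inner_smul_left, real_inner_smul_right,
    real_inner_comm, norm_smul, norm_smul, mul_pow, mul_pow, hu, Real.norm_eq_abs,
    Real.norm_eq_abs, sq_abs, sq_abs]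
  ring

lemma det_axialScaling [FiniteDimensional ℝ V] {u : V} (hu : ‖u‖ = 1) (h : ℝ) {ρ : ℝ}
    (hρ : ρ ≠ 0) :
    LinearMap.det (axialScaling u h ρ) = h * ρ ^ (Module.finrank ℝ V - 1) := by
  have : Nontrivial V := ⟨u, 0, by rintro rfl; simp at hu⟩
  have axialScaling_eq_transvection : axialScaling u h ρ =
      ρ • LinearMap.transvection (((h - ρ) / ρ) • innerₛₗ ℝ u) u := by
    ext w
    rw [axialScaling_apply, LinearMap.smul_apply, LinearMap.transvection.apply, smul_add,
      smul_smul, LinearMap.smul_apply, innerₛₗ_apply_apply, smul_eq_mul, ← mul_assoc,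
      mul_div_cancel₀ _ hρ]
  rw [axialScaling_eq_transvection, LinearMap.det_smul, LinearMap.transvection.det,
    LinearMap.smul_apply, innerₛₗ_apply_apply, real_inner_self_eq_norm_sq, hu,
    ← mul_pow_sub_one Module.finrank_pos.ne', smul_eq_mul]
  field_simp
  ring

/-- The cap of height `d` cut from the ball of centre `c` and radius `r`, with pole in the
direction of the unit vector `u`. -/
def sphericalCap (c u : V) (r d : ℝ) : Set V :=
  {y ∈ ball c r | r - d < inner ℝ u (y - c)}

-- The transverse semi-axis `√(r * h)` makes the ellipsoid osculate the sphere at the pole.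
lemma add_axialScaling_mem_sphericalCap {u : V} (hu : ‖u‖ = 1) (c : V) {r h : ℝ} (hh : 0 < h)
    (hhr : h ≤ r) {w : V} (hw : ‖w‖ < 1) :
    c + (r - h) • u + axialScaling u h √(r * h) w ∈ sphericalCap c u r (2 * h) := by
  set s : ℝ := inner ℝ u w
  have hs : |s| < 1 := (abs_real_inner_le_norm u w).trans_lt (by rwa [hu, one_mul])
  have hs_lower : -1 < s := (abs_lt.1 hs).1
  have sub_eq : c + (r - h) • u + axialScaling u h √(r * h) w - c =
      (r - h) • u + axialScaling u h √(r * h) w := by abel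
  have height_eq : inner ℝ u ((r - h) • u + axialScaling u h √(r * h) w) = r - h + h * s := by
    rw [inner_add_right, inner_axialScaling hu, real_inner_smul_right,
      real_inner_self_eq_norm_sq, hu]
    ring
  have norm_sq_eq : ‖(r - h) • u + axialScaling u h √(r * h) w‖ ^ 2 =
      r ^ 2 - h * (r - h) * (1 - s) ^ 2 - r * h * (1 - ‖w‖ ^ 2) := by
    rw [norm_add_sq_real, real_inner_smul_left, inner_axialScaling hu, norm_axialScaling_sq hu,
      norm_smul, hu, mul_one, Real.norm_eq_abs, sq_abs,
      Real.sq_sqrt (mul_nonneg (hh.le.trans hhr) hh.le)]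
    ring
  refine ⟨?_, ?_⟩
  · rw [mem_ball_iff_norm, sub_eq]
    have : 0 ≤ h * (r - h) * (1 - s) ^ 2 :=
      mul_nonneg (mul_nonneg hh.le (sub_nonneg.2 hhr)) (sq_nonneg _)
    have : 0 < r * h * (1 - ‖w‖ ^ 2) :=
      mul_pos (mul_pos (hh.trans_le hhr) hh) (by nlinarith [norm_nonneg w])
    exact lt_of_pow_lt_pow_left₀ 2 (hh.le.trans hhr) (by linarith)
  · rw [sub_eq, height_eq]
    nlinarith

theorem le_measureReal_sphericalCap [FiniteDimensional ℝ V] [MeasurableSpace V] [BorelSpace V]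
    (μ : Measure V) [μ.IsAddHaarMeasure] (c : V) {u : V} (hu : ‖u‖ = 1) {r h : ℝ}
    (hh : 0 < h) (hhr : h ≤ r) :
    h * √(r * h) ^ (Module.finrank ℝ V - 1) * μ.real (ball 0 1) ≤
      μ.real (sphericalCap c u r (2 * h)) := by
  set ρ := √(r * h)
  have hρ : 0 < ρ := Real.sqrt_pos.2 (mul_pos (hh.trans_le hhr) hh)
  set ellipsoid := (c + (r - h) • u + ·) '' (axialScaling u h ρ '' ball 0 1)
  have volume_ellipsoid :
      μ.real ellipsoid = h * ρ ^ (Module.finrank ℝ V - 1) * μ.real (ball 0 1) := by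
    simp only [ellipsoid]
    rw [measureReal_def, image_add_left, measure_preimage_add, Measure.addHaar_image_linearMap,
      det_axialScaling hu h hρ.ne', abs_of_pos (by positivity), ENNReal.toReal_mul,
      ENNReal.toReal_ofReal (by positivity), measureReal_def]
  have ellipsoid_subset : ellipsoid ⊆ sphericalCap c u r (2 * h) := by
    rintro _ ⟨_, ⟨w, hw, rfl⟩, rfl⟩
    exact add_axialScaling_mem_sphericalCap hu c hh hhr (mem_ball_zero_iff.1 hw)
  have cap_ne_top : μ (sphericalCap c u r (2 * h)) ≠ ⊤ :=
    measure_ne_top_of_subset (sep_subset _ _) measure_ball_lt_top.ne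
  exact volume_ellipsoid.symm.le.trans (measureReal_mono ellipsoid_subset cap_ne_top)

lemma sphericalCap_subset_ball_diff_ball {c x u : V} {r R d : ℝ} (hu : ‖u‖ = 1)
    (hcx : ‖c - x‖ • u = c - x) (hd : d ≤ ‖c - x‖ + r - R) :
    sphericalCap c u r d ⊆ ball c r \ ball x R := by
  rintro y ⟨hyc, hy⟩
  refine ⟨hyc, ?_⟩
  have inner_eq : inner ℝ u (y - x) = inner ℝ u (y - c) + ‖c - x‖ := by
    rw [← sub_add_sub_cancel y c x, inner_add_right, ← hcx, norm_smul, inner_smul_right,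
      real_inner_self_eq_norm_sq, norm_norm, hu]
    ring
  have inner_le : inner ℝ u (y - x) ≤ ‖y - x‖ := by
    simpa only [hu, one_mul] using real_inner_le_norm u (y - x)
  rw [mem_ball_iff_norm, not_lt]
  linarith

lemma sphericalCap_subset_ball_inter_ball {c x u : V} {r R d : ℝ}
    (hcx : ‖x - c‖ • u = x - c) (hd : 0 ≤ d) (hr : 0 ≤ r) (hrR : r ≤ R)
    (hdepth : 2 * d ≤ R + r - ‖x - c‖) :
    sphericalCap c u r d ⊆ ball x R ∩ ball c r := by
  rintro y ⟨hyc, hy⟩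
  refine ⟨?_, hyc⟩
  set L := ‖x - c‖
  have hL : 0 ≤ L := norm_nonneg _
  have norm_sub_sq_lt : ‖y - c‖ ^ 2 < r ^ 2 := by
    gcongr
    exact mem_ball_iff_norm.1 hyc
  have norm_sq_eq : ‖y - x‖ ^ 2 = ‖y - c‖ ^ 2 - 2 * L * inner ℝ u (y - c) + L ^ 2 := by
    rw [← sub_sub_sub_cancel_right y x c, norm_sub_sq_real, ← hcx, real_inner_smul_right,
      real_inner_comm, hcx]
    ring
  rw [mem_ball_iff_norm]
  refine lt_of_pow_lt_pow_left₀ 2 (hr.trans hrR) ?_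
  calc ‖y - x‖ ^ 2 < r ^ 2 - 2 * L * (r - d) + L ^ 2 := by
        rw [norm_sq_eq]
        have := mul_le_mul_of_nonneg_left hy.le hL
        linarith
    _ = r ^ 2 + L * (R - r) - L * (R + r - 2 * d - L) := by ring
    _ ≤ r ^ 2 + (R + r) * (R - r) - 0 := by
        gcongr
        · linarith
        · exact mul_nonneg hL (by linarith)
    _ = R ^ 2 := by ring

lemma exists_norm_eq_one_norm_smul_eq [Nontrivial V] (v : V) :
    ∃ u : V, ‖u‖ = 1 ∧ ‖v‖ • u = v := by
  rcases eq_or_ne v 0 with rfl | hv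
  · obtain ⟨u, hu⟩ := exists_norm_eq V zero_le_one
    exact ⟨u, hu, by simp⟩
  · exact ⟨NormedSpace.normalize v, NormedSpace.norm_normalize_eq_one_iff.2 hv,
      NormedSpace.norm_smul_normalize v⟩

-- If neither small ball sticks out of the large one by `t / 2`, where `t = r₁ + r₂ - R`, then
-- their centres are so close that the two small balls overlap to depth at least `t`.
theorem exists_sphericalCap_subset [Nontrivial V] (x x₁ x₂ : V) {R r₁ r₂ : ℝ} (hr₂ : 0 ≤ r₂)
    (h₂₁ : r₂ ≤ r₁) (hR : R ≤ r₁ + r₂) :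
    ∃ (c u : V) (r : ℝ), ‖u‖ = 1 ∧ r₂ ≤ r ∧ sphericalCap c u r ((r₁ + r₂ - R) / 2) ⊆
      (ball x₁ r₁ \ ball x R) ∪ (ball x₂ r₂ \ ball x R) ∪ (ball x₁ r₁ ∩ ball x₂ r₂) := by
  by_cases h₁ : (r₁ + r₂ - R) / 2 ≤ ‖x₁ - x‖ + r₁ - R
  · obtain ⟨u, hu, hux⟩ := exists_norm_eq_one_norm_smul_eq (x₁ - x)
    exact ⟨x₁, u, r₁, hu, h₂₁, (sphericalCap_subset_ball_diff_ball hu hux h₁).trans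
      (subset_union_left.trans subset_union_left)⟩
  by_cases h₂ : (r₁ + r₂ - R) / 2 ≤ ‖x₂ - x‖ + r₂ - R
  · obtain ⟨u, hu, hux⟩ := exists_norm_eq_one_norm_smul_eq (x₂ - x)
    exact ⟨x₂, u, r₂, hu, le_rfl, (sphericalCap_subset_ball_diff_ball hu hux h₂).trans
      (subset_union_right.trans subset_union_left)⟩
  obtain ⟨u, hu, hux⟩ := exists_norm_eq_one_norm_smul_eq (x₁ - x₂)
  have centres_close : ‖x₁ - x₂‖ ≤ ‖x₁ - x‖ + ‖x₂ - x‖ := by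
    simpa only [dist_eq_norm] using dist_triangle_right x₁ x₂ x
  exact ⟨x₂, u, r₂, hu, le_rfl, (sphericalCap_subset_ball_inter_ball hux (by linarith) hr₂ h₂₁
    (by linarith)).trans subset_union_right⟩

variable [FiniteDimensional ℝ V] [Nontrivial V] [MeasurableSpace V] [BorelSpace V]

theorem le_measureReal_union_balls (μ : Measure V) [μ.IsAddHaarMeasure] (x x₁ x₂ : V)
    {R r₁ r₂ : ℝ} (hr₂ : 0 ≤ r₂) (h₂₁ : r₂ ≤ r₁) (h₁R : r₁ ≤ R) (hR : R < r₁ + r₂) :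
    (r₁ + r₂ - R) / 4 * √(r₂ * ((r₁ + r₂ - R) / 4)) ^ (Module.finrank ℝ V - 1) *
        μ.real (ball 0 1) ≤
      μ.real ((ball x₁ r₁ \ ball x R) ∪ (ball x₂ r₂ \ ball x R) ∪
        (ball x₁ r₁ ∩ ball x₂ r₂)) := by
  obtain ⟨c, u, r, hu, hr, cap_subset⟩ := exists_sphericalCap_subset x x₁ x₂ hr₂ h₂₁ hR.le
  set h := (r₁ + r₂ - R) / 4 with h_def
  have hh : 0 < h := by linarith
  rw [show (r₁ + r₂ - R) / 2 = 2 * h by rw [h_def]; ring] at cap_subset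
  have union_subset : (ball x₁ r₁ \ ball x R) ∪ (ball x₂ r₂ \ ball x R) ∪
      (ball x₁ r₁ ∩ ball x₂ r₂) ⊆ ball x₁ r₁ ∪ ball x₂ r₂ := by grind
  have union_ne_top := measure_ne_top_of_subset union_subset
    (measure_union_ne_top measure_ball_lt_top.ne measure_ball_lt_top.ne : μ _ ≠ ⊤)
  calc _ ≤ h * √(r * h) ^ (Module.finrank ℝ V - 1) * μ.real (ball 0 1) := by gcongr
    _ ≤ μ.real (sphericalCap c u r (2 * h)) :=
        le_measureReal_sphericalCap μ c hu hh (by linarith)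
    _ ≤ _ := measureReal_mono cap_subset union_ne_top

end SphericalCap

lemma diff_union_diff_union_inter_subset_symmDiff {α : Type*} {E E₁ E₂ : Set α}
    (hsub : E₁ ∪ E₂ ⊆ E) (hdisj : Disjoint E₁ E₂) (B B₁ B₂ : Set α) :
    (B₁ \ B) ∪ (B₂ \ B) ∪ (B₁ ∩ B₂) ⊆ symmDiff E B ∪ symmDiff E₁ B₁ ∪ symmDiff E₂ B₂ := by
  intro y hy
  have mem_E := @hsub y
  have not_mem_both : y ∈ E₁ → y ∉ E₂ := fun h₁ h₂ ↦ disjoint_left.1 hdisj h₁ h₂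
  simp only [mem_union, mem_sdiff, mem_inter_iff, mem_symmDiff] at mem_E hy ⊢
  tauto

lemma measureReal_union_three_le_symmDiff {α : Type*} [MeasurableSpace α] (μ : Measure α)
    {E E₁ E₂ B B₁ B₂ : Set α} (hsub : E₁ ∪ E₂ ⊆ E) (hdisj : Disjoint E₁ E₂) (hE : μ E ≠ ⊤)
    (hB : μ B ≠ ⊤) (hB₁ : μ B₁ ≠ ⊤) (hB₂ : μ B₂ ≠ ⊤) :
    μ.real ((B₁ \ B) ∪ (B₂ \ B) ∪ (B₁ ∩ B₂)) ≤
      μ.real (symmDiff E B) + μ.real (symmDiff E₁ B₁) + μ.real (symmDiff E₂ B₂) := by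
  have hE₁ := measure_ne_top_of_subset (subset_union_left.trans hsub) hE
  have hE₂ := measure_ne_top_of_subset (subset_union_right.trans hsub) hE
  have union_ne_top := measure_union_ne_top
    (measure_union_ne_top (measure_symmDiff_ne_top hE hB) (measure_symmDiff_ne_top hE₁ hB₁))
    (measure_symmDiff_ne_top hE₂ hB₂)
  calc _ ≤ μ.real (symmDiff E B ∪ symmDiff E₁ B₁ ∪ symmDiff E₂ B₂) :=
        measureReal_mono (diff_union_diff_union_inter_subset_symmDiff hsub hdisj B B₁ B₂)
          union_ne_top
    _ ≤ μ.real (symmDiff E B ∪ symmDiff E₁ B₁) + μ.real (symmDiff E₂ B₂) :=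
        measureReal_union_le _ _
    _ ≤ _ := by
        gcongr
        exact measureReal_union_le _ _

section VolumeRadius

variable {n : ℕ} {E E₁ E₂ : Set (EuclideanSpace ℝ (Fin n))}

/-- The radius `r_E` of the balls with the same volume as `E`; for `n = 0` or `volume E = ⊤` it is
a junk value. -/
noncomputable def volumeRadius (E : Set (EuclideanSpace ℝ (Fin n))) : ℝ :=
  volume.real E ^ (1 / (n : ℝ)) /
    volume.real (ball (0 : EuclideanSpace ℝ (Fin n)) 1) ^ (1 / (n : ℝ))

lemma rpow_one_div_natCast_pow (hn : n ≠ 0) {a : ℝ} (ha : 0 ≤ a) : (a ^ (1 / (n : ℝ))) ^ n = a := by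
  rw [one_div, Real.rpow_inv_natCast_pow ha hn]

lemma measureReal_ball_zero_one_pos :
    0 < volume.real (ball (0 : EuclideanSpace ℝ (Fin n)) 1) :=
  ENNReal.toReal_pos (measure_ball_pos _ _ one_pos).ne' measure_ball_lt_top.ne

lemma volumeRadius_pos (h0 : volume E ≠ 0) (hE : volume E ≠ ⊤) : 0 < volumeRadius E :=
  div_pos (Real.rpow_pos_of_pos (ENNReal.toReal_pos h0 hE) _)
    (Real.rpow_pos_of_pos measureReal_ball_zero_one_pos _)

lemma volumeRadius_mono (h : volume E₁ ≤ volume E₂) (hE₂ : volume E₂ ≠ ⊤) :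
    volumeRadius E₁ ≤ volumeRadius E₂ := by
  have : volume.real E₁ ≤ volume.real E₂ := ENNReal.toReal_mono hE₂ h
  unfold volumeRadius
  gcongr

lemma volumeRadius_lt_add_iff : volumeRadius E < volumeRadius E₁ + volumeRadius E₂ ↔
    volume.real E ^ (1 / (n : ℝ)) <
      volume.real E₁ ^ (1 / (n : ℝ)) + volume.real E₂ ^ (1 / (n : ℝ)) := by
  rw [volumeRadius, volumeRadius, volumeRadius, ← add_div,
    div_lt_div_iff_of_pos_right (Real.rpow_pos_of_pos measureReal_ball_zero_one_pos _)]

lemma volumeRadius_add_sub_div_eq :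
    (volumeRadius E₁ + volumeRadius E₂ - volumeRadius E) / (4 * volumeRadius E₂) =
      (volume.real E₁ ^ (1 / (n : ℝ)) + volume.real E₂ ^ (1 / (n : ℝ)) -
        volume.real E ^ (1 / (n : ℝ))) / (4 * volume.real E₂ ^ (1 / (n : ℝ))) := by
  rw [volumeRadius, volumeRadius, volumeRadius, ← add_div, ← sub_div, mul_div_assoc',
    div_div_div_cancel_right₀ (Real.rpow_pos_of_pos measureReal_ball_zero_one_pos _).ne']

lemma volumeRadius_pow_mul_measureReal_ball (hn : n ≠ 0)
    (E : Set (EuclideanSpace ℝ (Fin n))) :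
    volumeRadius E ^ n * volume.real (ball (0 : EuclideanSpace ℝ (Fin n)) 1) = volume.real E := by
  rw [volumeRadius, div_pow, rpow_one_div_natCast_pow hn measureReal_nonneg,
    rpow_one_div_natCast_pow hn measureReal_nonneg,
    div_mul_cancel₀ _ measureReal_ball_zero_one_pos.ne']

lemma measureReal_ball_eq_pow_mul (x : EuclideanSpace ℝ (Fin n)) {r : ℝ} (hr : 0 < r) :
    volume.real (ball x r) = r ^ n * volume.real (ball (0 : EuclideanSpace ℝ (Fin n)) 1) := by
  rw [measureReal_def, Measure.addHaar_ball_of_pos _ _ hr, ENNReal.toReal_mul,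
    ENNReal.toReal_ofReal (by positivity), finrank_euclideanSpace_fin, measureReal_def]

lemma volume_ball_volumeRadius (hn : n ≠ 0) (h0 : volume E ≠ 0) (hE : volume E ≠ ⊤)
    (x : EuclideanSpace ℝ (Fin n)) : volume (ball x (volumeRadius E)) = volume E := by
  rw [← measureReal_eq_measureReal_iff measure_ball_lt_top.ne hE,
    measureReal_ball_eq_pow_mul x (volumeRadius_pos h0 hE),
    volumeRadius_pow_mul_measureReal_ball hn E]

lemma eq_volumeRadius_of_volume_ball_eq (hn : n ≠ 0) (h0 : volume E ≠ 0)
    {x : EuclideanSpace ℝ (Fin n)} {r : ℝ} (h : volume (ball x r) = volume E) :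
    r = volumeRadius E := by
  have hr : 0 < r := by
    contrapose! h0
    rw [← h, ball_eq_empty.2 h0, measure_empty]
  have hE : volume E ≠ ⊤ := h ▸ measure_ball_lt_top.ne
  have pow_eq : r ^ n = volumeRadius E ^ n := by
    refine mul_right_cancel₀ (measureReal_ball_zero_one_pos (n := n)).ne' ?_
    rw [← measureReal_ball_eq_pow_mul x hr, volumeRadius_pow_mul_measureReal_ball hn E,
      measureReal_def, h, measureReal_def]
  exact (pow_left_inj₀ hr.le (volumeRadius_pos h0 hE).le hn).1 pow_eq

lemma fraenkelAsymmetry_nonneg (E : Set (EuclideanSpace ℝ (Fin n))) :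
    0 ≤ fraenkelAsymmetry E := by
  refine Real.sInf_nonneg ?_
  rintro _ ⟨x, r, -, rfl⟩
  positivity

lemma exists_measureReal_symmDiff_ball_lt (hn : n ≠ 0) (h0 : volume E ≠ 0) (hE : volume E ≠ ⊤)
    {ε : ℝ} (hε : 0 < ε) :
    ∃ x, volume.real (symmDiff E (ball x (volumeRadius E))) <
      volume.real E * fraenkelAsymmetry E + ε := by
  have hv : 0 < volume.real E := ENNReal.toReal_pos h0 hE
  have lt_add : fraenkelAsymmetry E < fraenkelAsymmetry E + ε / volume.real E :=
    lt_add_of_pos_right _ (div_pos hε hv)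
  obtain ⟨_, ⟨x, r, hr, rfl⟩, ht⟩ := exists_lt_of_csInf_lt
    (by exact ⟨_, 0, volumeRadius E, volume_ball_volumeRadius hn h0 hE 0, rfl⟩) lt_add
  obtain rfl := eq_volumeRadius_of_volume_ball_eq hn h0 hr
  refine ⟨x, ?_⟩
  rwa [← measureReal_def, ← measureReal_def, div_lt_iff₀' hv, mul_add,
    mul_div_cancel₀ _ hv.ne'] at ht

theorem le_sum_measureReal_mul_fraenkelAsymmetry {a : ℝ} (hn : n ≠ 0) (h0 : volume E ≠ 0)
    (hE : volume E ≠ ⊤) (h0₁ : volume E₁ ≠ 0) (hE₁ : volume E₁ ≠ ⊤) (h0₂ : volume E₂ ≠ 0)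
    (hE₂ : volume E₂ ≠ ⊤)
    (ha : ∀ x x₁ x₂, a ≤ volume.real (symmDiff E (ball x (volumeRadius E))) +
      volume.real (symmDiff E₁ (ball x₁ (volumeRadius E₁))) +
      volume.real (symmDiff E₂ (ball x₂ (volumeRadius E₂)))) :
    a ≤ volume.real E * fraenkelAsymmetry E + volume.real E₁ * fraenkelAsymmetry E₁ +
      volume.real E₂ * fraenkelAsymmetry E₂ := by
  refine le_of_forall_pos_le_add fun ε hε ↦ ?_
  have hε₃ : 0 < ε / 3 := by positivity
  obtain ⟨x, hx⟩ := exists_measureReal_symmDiff_ball_lt hn h0 hE hε₃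
  obtain ⟨x₁, hx₁⟩ := exists_measureReal_symmDiff_ball_lt hn h0₁ hE₁ hε₃
  obtain ⟨x₂, hx₂⟩ := exists_measureReal_symmDiff_ball_lt hn h0₂ hE₂ hε₃
  linarith [ha x x₁ x₂]

lemma mul_sqrt_mul_pow_eq_pow_mul_rpow (hn : n ≠ 0) {r τ : ℝ} (hr : 0 ≤ r) (hτ : 0 ≤ τ) :
    r * τ * √(r * (r * τ)) ^ (n - 1) = r ^ n * τ ^ (((n : ℝ) + 1) / 2) := by
  have rpow_eq : τ ^ (((n : ℝ) + 1) / 2) = τ * √τ ^ (n - 1) := by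
    rw [Real.sqrt_eq_rpow, ← Real.rpow_mul_natCast hτ, ← Real.rpow_one_add' hτ (by positivity),
      Nat.cast_pred (Nat.pos_of_ne_zero hn)]
    congr 1
    ring
  rw [rpow_eq, ← mul_assoc r r, ← sq, Real.sqrt_mul (sq_nonneg r), Real.sqrt_sq hr, mul_pow,
    ← mul_pow_sub_one hn r]
  ring

theorem measureReal_mul_rpow_le_sum_fraenkelAsymmetry (hn : n ≠ 0) (hE : volume E ≠ ⊤)
    (h0₂ : volume E₂ ≠ 0) (hsub : E₁ ∪ E₂ ⊆ E) (hdisj : Disjoint E₁ E₂)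
    (h₂₁ : volume E₂ ≤ volume E₁)
    (hlt : volumeRadius E < volumeRadius E₁ + volumeRadius E₂) :
    volume.real E₂ * ((volumeRadius E₁ + volumeRadius E₂ - volumeRadius E) /
        (4 * volumeRadius E₂)) ^ (((n : ℝ) + 1) / 2) ≤
      volume.real E * fraenkelAsymmetry E + volume.real E₁ * fraenkelAsymmetry E₁ +
        volume.real E₂ * fraenkelAsymmetry E₂ := by
  have : NeZero n := ⟨hn⟩
  have hsub₁ := subset_union_left.trans hsub
  have hE₁ := measure_ne_top_of_subset hsub₁ hE
  have hE₂ := measure_ne_top_of_subset (subset_union_right.trans hsub) hE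
  have h0₁ := ((pos_iff_ne_zero.2 h0₂).trans_le h₂₁).ne'
  have h0 := ((pos_iff_ne_zero.2 h0₁).trans_le (measure_mono hsub₁)).ne'
  have hr₂ := volumeRadius_pos h0₂ hE₂
  have hr₂₁ := volumeRadius_mono h₂₁ hE₁
  have hr₁ := volumeRadius_mono (measure_mono hsub₁) hE
  refine le_sum_measureReal_mul_fraenkelAsymmetry hn h0 hE h0₁ hE₁ h0₂ hE₂ fun x x₁ x₂ ↦ ?_
  refine le_trans (le_of_eq ?_) ((le_measureReal_union_balls volume x x₁ x₂ hr₂.le hr₂₁ hr₁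
    hlt).trans (measureReal_union_three_le_symmDiff volume hsub hdisj hE measure_ball_lt_top.ne
      measure_ball_lt_top.ne measure_ball_lt_top.ne))
  set τ := (volumeRadius E₁ + volumeRadius E₂ - volumeRadius E) / (4 * volumeRadius E₂) with τ_def
  have hτ : 0 ≤ τ := div_nonneg (by linarith) (by positivity)
  have depth_eq : (volumeRadius E₁ + volumeRadius E₂ - volumeRadius E) / 4 =
      volumeRadius E₂ * τ := by
    rw [τ_def]
    field_simp
  rw [depth_eq, finrank_euclideanSpace_fin, mul_sqrt_mul_pow_eq_pow_mul_rpow hn hr₂.le hτ,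
    ← volumeRadius_pow_mul_measureReal_ball hn E₂]
  ring

end VolumeRadius

lemma pow_mul_le_add_pow_sub_pow_sub_pow {n : ℕ} (hn : 2 ≤ n) {a b : ℝ} (ha : 0 ≤ a)
    (hb : 0 ≤ b) : a ^ (n - 1) * b ≤ (a + b) ^ n - a ^ n - b ^ n := by
  have hn0 : n ≠ 0 := by lia
  have superadditive : a ^ (n - 1) + b ^ (n - 1) ≤ (a + b) ^ (n - 1) :=
    pow_add_pow_le ha hb (by lia)
  have cross_nonneg : 0 ≤ a * b ^ (n - 1) := by positivity
  calc a ^ (n - 1) * b ≤ (a + b) * (a ^ (n - 1) + b ^ (n - 1)) -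
        a * a ^ (n - 1) - b * b ^ (n - 1) := by linarith
    _ ≤ (a + b) * (a + b) ^ (n - 1) - a * a ^ (n - 1) - b * b ^ (n - 1) := by gcongr
    _ = (a + b) ^ n - a ^ n - b ^ n := by simp only [mul_pow_sub_one hn0]

lemma pow_sub_pow_le_mul_sub {x y : ℝ} (hx : 0 ≤ x) (hy : 0 ≤ y) (n : ℕ) :
    x ^ n - y ^ n ≤ n * x ^ (n - 1) * (x - y) := by
  have bernoulli := pow_add_mul_le_add_pow (a := x) (b := y - x) hx (by linarith) n
  rw [add_sub_cancel] at bernoulli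
  linarith

lemma pow_sub_pow_div_le {n : ℕ} (hn : 2 ≤ n) {a b v : ℝ} (hb : 0 < b) (hba : b ≤ a)
    (hv : 0 ≤ v) (hvab : v ≤ a + b) :
    ((a + b) ^ n - v ^ n) / ((a + b) ^ n - (a ^ n + b ^ n)) ≤
      4 * n * 2 ^ (n - 1) * ((a + b - v) / (4 * b)) := by
  have ha : 0 < a := hb.trans_le hba
  have numerator_le : (a + b) ^ n - v ^ n ≤ n * (2 * a) ^ (n - 1) * (a + b - v) := by
    refine (pow_sub_pow_le_mul_sub (by positivity) hv n).trans ?_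
    gcongr
    linarith
  have le_denominator : a ^ (n - 1) * b ≤ (a + b) ^ n - (a ^ n + b ^ n) := by
    linarith [pow_mul_le_add_pow_sub_pow_sub_pow hn ha.le hb.le]
  calc _ ≤ n * (2 * a) ^ (n - 1) * (a + b - v) / (a ^ (n - 1) * b) := by
        gcongr
    _ = _ := by
        rw [mul_pow]
        field_simp

lemma max_zero_div_rpow_add_rpow_pow_sub_nonneg {n : ℕ} (hn : n ≠ 0) {a b : ℝ} (ha : 0 ≤ a)
    (hb : 0 ≤ b) (x : ℝ) :
    0 ≤ max 0 x / ((a ^ (1 / (n : ℝ)) + b ^ (1 / (n : ℝ))) ^ n - (a + b)) := by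
  have superadditive := pow_add_pow_le (Real.rpow_nonneg ha (1 / (n : ℝ)))
    (Real.rpow_nonneg hb (1 / (n : ℝ))) hn
  rw [rpow_one_div_natCast_pow hn ha, rpow_one_div_natCast_pow hn hb] at superadditive
  exact div_nonneg (le_max_left 0 x) (sub_nonneg.2 superadditive)

/-- The factor relating the mean asymmetry of three nested sets to the bracket of the distortion
estimate: it combines `|E| ≤ 2ⁿ |E₁|` with the Lipschitz constant of `pow_sub_pow_div_le`. -/
noncomputable def distortionConst (n : ℕ) : ℝ :=
  ((2 : ℝ) ^ n + 1)⁻¹ * ((4 * n * 2 ^ (n - 1) : ℝ)⁻¹) ^ (((n : ℝ) + 1) / 2)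

lemma distortionConst_pos {n : ℕ} (hn : n ≠ 0) : 0 < distortionConst n := by
  unfold distortionConst
  positivity

lemma distortionConst_mul_le_div {n : ℕ} (hn : 2 ≤ n) {a b v X : ℝ} (hb : 0 < b) (hba : b ≤ a)
    (hv : 0 < v) (hvab : v ≤ a + b)
    (hX : b ^ n * ((a + b - v) / (4 * b)) ^ (((n : ℝ) + 1) / 2) ≤ X) :
    distortionConst n * (b ^ n / (a ^ n + b ^ n)) *
        (((a + b) ^ n - v ^ n) / ((a + b) ^ n - (a ^ n + b ^ n))) ^ (((n : ℝ) + 1) / 2) ≤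
      X / (v ^ n + (a ^ n + b ^ n)) := by
  have ha : 0 < a := hb.trans_le hba
  have bracket_le := pow_sub_pow_div_le hn hb hba hv.le hvab
  set δ := ((a + b) ^ n - v ^ n) / ((a + b) ^ n - (a ^ n + b ^ n))
  set τ := (a + b - v) / (4 * b)
  set K : ℝ := 4 * n * 2 ^ (n - 1) with K_def
  have hK : 0 < K := by positivity
  have hδ : 0 ≤ δ := div_nonneg (sub_nonneg.2 (by gcongr))
    (sub_nonneg.2 (pow_add_pow_le ha.le hb.le (by lia)))
  have total_le : v ^ n + (a ^ n + b ^ n) ≤ (2 ^ n + 1) * (a ^ n + b ^ n) := by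
    have : v ^ n ≤ 2 ^ n * a ^ n := by
      rw [← mul_pow]
      gcongr
      linarith
    have : 0 ≤ 2 ^ n * b ^ n := by positivity
    linarith
  calc _ = b ^ n * (K⁻¹ * δ) ^ (((n : ℝ) + 1) / 2) / ((2 ^ n + 1) * (a ^ n + b ^ n)) := by
        rw [distortionConst, ← K_def, Real.mul_rpow (by positivity) hδ]
        field_simp
    _ ≤ b ^ n * τ ^ (((n : ℝ) + 1) / 2) / (v ^ n + (a ^ n + b ^ n)) := by
        gcongr
        exact (inv_mul_le_iff₀ hK).2 bracket_le
    _ ≤ X / (v ^ n + (a ^ n + b ^ n)) := by gcongr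

theorem distortionConst_mul_le_mean_fraenkelAsymmetry {n : ℕ} (hn : 2 ≤ n)
    {E E₁ E₂ : Set (EuclideanSpace ℝ (Fin n))} (hE : volume E ≠ ⊤) (h0₂ : volume E₂ ≠ 0)
    (hsub : E₁ ∪ E₂ ⊆ E) (hdisj : Disjoint E₁ E₂) (h₂₁ : volume E₂ ≤ volume E₁) :
    distortionConst n * (volume.real E₂ / (volume.real E₁ + volume.real E₂)) *
        (max 0 ((volume.real E₁ ^ (1 / (n : ℝ)) + volume.real E₂ ^ (1 / (n : ℝ))) ^ n -
            volume.real E) /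
          ((volume.real E₁ ^ (1 / (n : ℝ)) + volume.real E₂ ^ (1 / (n : ℝ))) ^ n -
            (volume.real E₁ + volume.real E₂))) ^ (((n : ℝ) + 1) / 2) ≤
      (volume.real E * fraenkelAsymmetry E + volume.real E₁ * fraenkelAsymmetry E₁ +
          volume.real E₂ * fraenkelAsymmetry E₂) /
        (volume.real E + (volume.real E₁ + volume.real E₂)) := by
  have hn0 : n ≠ 0 := by lia
  have hE₁ := measure_ne_top_of_subset (subset_union_left.trans hsub) hE
  have v₂_pos : 0 < volume.real E₂ :=
    ENNReal.toReal_pos h0₂ (measure_ne_top_of_subset (subset_union_right.trans hsub) hE)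
  have v_pos : 0 < volume.real E :=
    v₂_pos.trans_le (measureReal_mono (subset_union_right.trans hsub) hE)
  have v₂_le_v₁ : volume.real E₂ ≤ volume.real E₁ := ENNReal.toReal_mono hE₁ h₂₁
  have pow_eq (F : Set (EuclideanSpace ℝ (Fin n))) :
      (volume.real F ^ (1 / (n : ℝ))) ^ n = volume.real F :=
    rpow_one_div_natCast_pow hn0 measureReal_nonneg
  rcases lt_or_ge (volume.real E ^ (1 / (n : ℝ)))
    (volume.real E₁ ^ (1 / (n : ℝ)) + volume.real E₂ ^ (1 / (n : ℝ))) with hlt | hge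
  · have geometric := measureReal_mul_rpow_le_sum_fraenkelAsymmetry hn0 hE h0₂ hsub hdisj h₂₁
      (volumeRadius_lt_add_iff.2 hlt)
    rw [volumeRadius_add_sub_div_eq] at geometric
    replace geometric := (congrArg (· * _) (pow_eq E₂)).trans_le geometric
    have volume_le : volume.real E ≤
        (volume.real E₁ ^ (1 / (n : ℝ)) + volume.real E₂ ^ (1 / (n : ℝ))) ^ n := by
      rw [← pow_eq E]
      gcongr
    rw [max_eq_right (sub_nonneg.2 volume_le)]
    simpa only [pow_eq] using distortionConst_mul_le_div hn (Real.rpow_pos_of_pos v₂_pos _)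
      (Real.rpow_le_rpow v₂_pos.le v₂_le_v₁ (by positivity)) (Real.rpow_pos_of_pos v_pos _)
      hlt.le geometric
  · have le_volume :
        (volume.real E₁ ^ (1 / (n : ℝ)) + volume.real E₂ ^ (1 / (n : ℝ))) ^ n ≤
          volume.real E := by
      rw [← pow_eq E]
      gcongr
    have D_nonneg := fraenkelAsymmetry_nonneg E
    have D₁_nonneg := fraenkelAsymmetry_nonneg E₁
    have D₂_nonneg := fraenkelAsymmetry_nonneg E₂
    rw [max_eq_left (sub_nonpos.2 le_volume), zero_div, Real.zero_rpow (by positivity),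
      mul_zero]
    positivity

lemma sum_mul_div_sum_rpow_le {ι : Type*} (s : Finset ι) (w z : ι → ℝ) (hw : ∀ i ∈ s, 0 ≤ w i)
    (hw_sum : 0 < ∑ i ∈ s, w i) (hz : ∀ i ∈ s, 0 ≤ z i) {p : ℝ} (hp : 1 ≤ p) :
    ((∑ i ∈ s, w i * z i) / ∑ i ∈ s, w i) ^ p ≤ (∑ i ∈ s, w i * z i ^ p) / ∑ i ∈ s, w i := by
  simpa only [Finset.centerMass, smul_eq_mul, ← div_eq_inv_mul, Function.comp_apply]
    using (convexOn_rpow hp).map_centerMass_le hw hw_sum hz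

lemma mean_three_rpow_le {w w₁ w₂ z z₁ z₂ p : ℝ} (hw : 0 < w) (hw₁ : 0 ≤ w₁) (hw₂ : 0 ≤ w₂)
    (hz : 0 ≤ z) (hz₁ : 0 ≤ z₁) (hz₂ : 0 ≤ z₂) (hp : 1 ≤ p) :
    ((w * z + w₁ * z₁ + w₂ * z₂) / (w + (w₁ + w₂))) ^ p ≤
      (w * z ^ p + w₁ * z₁ ^ p + w₂ * z₂ ^ p) / (w + (w₁ + w₂)) := by
  have jensen := sum_mul_div_sum_rpow_le Finset.univ ![w, w₁, w₂] ![z, z₁, z₂]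
    (by simp [Fin.forall_fin_succ, hw.le, hw₁, hw₂])
    (by rw [Fin.sum_univ_three]; change 0 < w + w₁ + w₂; positivity)
    (by simp [Fin.forall_fin_succ, hz, hz₁, hz₂]) hp
  simpa [Fin.sum_univ_three, add_assoc] using jensen

lemma mul_mul_rpow_rpow {c w δ : ℝ} (hc : 0 ≤ c) (hw : 0 ≤ w) (hδ : 0 ≤ δ) (q p : ℝ) :
    (c * w * δ ^ q) ^ p = c ^ p * w ^ p * δ ^ (q * p) := by
  rw [Real.mul_rpow (mul_nonneg hc hw) (Real.rpow_nonneg hδ q), Real.mul_rpow hc hw,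
    Real.rpow_mul hδ]

/-- Quantitative distortion obstruction for nested sets: for `n ≥ 2` there is a constant
`C_n > 0` such that for all `E, E₁, E₂ ⊆ ℝⁿ` of positive finite measure with
`E₁ ∪ E₂ ⊆ E`, `E₁ ∩ E₂ = ∅` and `|E₁| ≥ |E₂|`,
`(|E| D(E)^{n/(n−1)} + |E₁| D(E₁)^{n/(n−1)} + |E₂| D(E₂)^{n/(n−1)}) / (|E| + |E₁ ∪ E₂|)`
is at least
`C_n (|E₂|/(|E₁|+|E₂|))^{n/(n−1)}
  · [((|E₁|^{1/n}+|E₂|^{1/n})ⁿ − |E|)₊ / ((|E₁|^{1/n}+|E₂|^{1/n})ⁿ − |E₁ ∪ E₂|)]^{n(n+1)/(2(n−1))}`,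
where the numerator of the bracket is truncated at `0` (so that the estimate is trivial
when `|E| ≥ (|E₁|^{1/n}+|E₂|^{1/n})ⁿ`). -/
theorem distortion_obstruction {n : ℕ} (hn : 2 ≤ n) :
    ∃ C : ℝ, 0 < C ∧
      ∀ (E E₁ E₂ : Set (EuclideanSpace ℝ (Fin n))),
        MeasurableSet E → MeasurableSet E₁ → MeasurableSet E₂ →
        0 < volume E → volume E < ⊤ →
        0 < volume E₁ → volume E₁ < ⊤ →
        0 < volume E₂ → volume E₂ < ⊤ →
        E₁ ∪ E₂ ⊆ E → E₁ ∩ E₂ = ∅ → volume E₂ ≤ volume E₁ →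
        ((volume E).toReal * fraenkelAsymmetry E ^ ((n : ℝ) / ((n : ℝ) - 1)) +
            (volume E₁).toReal * fraenkelAsymmetry E₁ ^ ((n : ℝ) / ((n : ℝ) - 1)) +
            (volume E₂).toReal * fraenkelAsymmetry E₂ ^ ((n : ℝ) / ((n : ℝ) - 1))) /
          ((volume E).toReal + (volume (E₁ ∪ E₂)).toReal) ≥
        C * ((volume E₂).toReal / ((volume E₁).toReal + (volume E₂).toReal)) ^
            ((n : ℝ) / ((n : ℝ) - 1)) *
          (max 0 (((volume E₁).toReal ^ (1 / (n : ℝ)) +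
                (volume E₂).toReal ^ (1 / (n : ℝ))) ^ n - (volume E).toReal) /
            (((volume E₁).toReal ^ (1 / (n : ℝ)) +
                (volume E₂).toReal ^ (1 / (n : ℝ))) ^ n - (volume (E₁ ∪ E₂)).toReal)) ^
            (((n : ℝ) * ((n : ℝ) + 1)) / (2 * ((n : ℝ) - 1))) := by
  have hn0 : n ≠ 0 := by lia
  have pred_pos : (0 : ℝ) < n - 1 := sub_pos.2 (by exact_mod_cast hn)
  have one_le_exponent : 1 ≤ (n : ℝ) / (n - 1) := (one_le_div pred_pos).2 (by linarith)
  have const_pos := distortionConst_pos hn0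
  refine ⟨distortionConst n ^ ((n : ℝ) / (n - 1)), Real.rpow_pos_of_pos const_pos _, ?_⟩
  intro E E₁ E₂ _ _ hE₂m hE_pos hE _ hE₁ hE₂_pos hE₂ hsub hinter h₂₁
  have hdisj : Disjoint E₁ E₂ := disjoint_iff_inter_eq_empty.2 hinter
  have v_pos : 0 < volume.real E := ENNReal.toReal_pos hE_pos.ne' hE.ne
  have v₁_nonneg : 0 ≤ volume.real E₁ := measureReal_nonneg
  have v₂_nonneg : 0 ≤ volume.real E₂ := measureReal_nonneg
  have bracket_nonneg := max_zero_div_rpow_add_rpow_pow_sub_nonneg hn0 v₁_nonneg v₂_nonneg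
  have mean_le := distortionConst_mul_le_mean_fraenkelAsymmetry hn hE.ne hE₂_pos.ne' hsub hdisj h₂₁
  have jensen := mean_three_rpow_le v_pos v₁_nonneg v₂_nonneg (fraenkelAsymmetry_nonneg E)
    (fraenkelAsymmetry_nonneg E₁) (fraenkelAsymmetry_nonneg E₂) one_le_exponent
  simp only [ge_iff_le, ← measureReal_def]
  rw [measureReal_union hdisj hE₂m hE₁.ne hE₂.ne, mul_comm (n : ℝ), ← div_mul_div_comm,
    ← mul_mul_rpow_rpow const_pos.le (by positivity) (bracket_nonneg _)]
  refine (Real.rpow_le_rpow ?_ mean_le (by positivity)).trans jensen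
  exact mul_nonneg (by positivity) (Real.rpow_nonneg (bracket_nonneg _) _)
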